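/- arXiv:0812.5002 — 2 statements merged into one kernel-verified Lean document; each statement's English description precedes it below -/
import Mathlib

section
/- Let L be the centerless twisted N=2 superconformal algebra. An element r ∈ Im(1⊗1 − τ) ⊂ L ⊗ L satisfies the classical Yang–Baxter equation c(r) = 0 if and only if it satisfies the modified Yang–Baxter equation x ∗ c(r) = 0 for all x ∈ L. -/
namespace N2

/-- Basis indices of the centerless twisted N=2 superconformal algebra:
`L m` is the Virasoro generator `L_m` (`m ∈ ℤ`),
`T k` is the Heisenberg generator `T_{k+1/2}` (`k ∈ ℤ`, index in `1/2 + ℤ`),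
`G n` is the fermionic generator `G_{n/2}` (`n ∈ ℤ`, index in `(1/2)ℤ`). -/
inductive Idx : Type
  | L : ℤ → Idx
  | T : ℤ → Idx
  | G : ℤ → Idx
  deriving DecidableEq

noncomputable section

/-- The centerless twisted N=2 superconformal algebra `𝓛`, as the free
complex vector space on the basis `{L_m, T_r, G_p}`. -/
abbrev Lsa : Type := Idx →₀ ℂ

/-- `𝓛 ⊗ 𝓛`, realized as the free complex vector space on pairs of basis indices. -/
abbrev V : Type := (Idx × Idx) →₀ ℂ

/-- `𝓛 ⊗ 𝓛 ⊗ 𝓛`. -/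
abbrev W : Type := (Idx × Idx × Idx) →₀ ℂ

/-- the basis vector indexed by `i`. -/
def e (i : Idx) : Lsa := Finsupp.single i 1

/-- the ℤ₂-parity of the basis elements: `L_m, T_r` are even, `G_p` is odd. -/
def par : Idx → ZMod 2
  | .L _ => 0
  | .T _ => 0
  | .G _ => 1

/-- the sign `(-1)^p` for `p ∈ ℤ₂`. -/
def sgn (p : ZMod 2) : ℂ := if p = 0 then 1 else -1

/-- the `(1/2)ℤ`-degree of a basis element, as a rational number:
`L_m ↦ m`, `T_{k+1/2} ↦ k + 1/2`, `G_{n/2} ↦ n/2`. -/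
def qdeg : Idx → ℚ
  | .L m => (m : ℚ)
  | .T k => (k : ℚ) + 1/2
  | .G n => (n : ℚ) / 2

/-- The super-bracket of `𝓛` on basis elements:
`[L_m, L_n] = (m-n) L_{m+n}`, `[L_m, T_r] = -r T_{r+m}`, `[T_r, T_s] = 0`,
`[L_m, G_p] = (m/2 - p) G_{p+m}`, `[T_r, G_p] = G_{p+r}`,
`[G_p, G_q] = (-1)^{2p} 2 L_{p+q}` if `p+q ∈ ℤ` and
`[G_p, G_q] = (-1)^{2p+1} (p-q) T_{p+q}` if `p+q ∈ 1/2+ℤ`,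
together with the super skew-symmetric counterparts. -/
def bk : Idx → Idx → Lsa
  | .L m, .L n => ((m : ℂ) - n) • e (.L (m + n))
  | .L m, .T k => (-((k : ℂ) + 1/2)) • e (.T (k + m))
  | .L m, .G n => (((m : ℂ) - n) / 2) • e (.G (n + 2*m))
  | .T k, .L m => ((k : ℂ) + 1/2) • e (.T (k + m))
  | .T _, .T _ => 0
  | .T k, .G n => e (.G (n + 2*k + 1))
  | .G n, .L m => (-((m : ℂ) - n) / 2) • e (.G (n + 2*m))
  | .G n, .T k => - e (.G (n + 2*k + 1))
  | .G n, .G n' =>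
      if (n + n') % 2 = 0 then
        ((-1 : ℂ) ^ n * 2) • e (.L ((n + n') / 2))
      else
        ((-1 : ℂ) ^ (n + 1) * (((n : ℂ) - n') / 2)) • e (.T ((n + n' - 1) / 2))

/-- the bracket of `𝓛`, extended bilinearly to all of `𝓛`. -/
def br (x y : Lsa) : Lsa :=
  x.sum fun i a => y.sum fun j b => (a * b) • bk i j

/-- the adjoint diagonal action of `𝓛` on `𝓛 ⊗ 𝓛`:
`x ∗ (a ⊗ b) = [x,a] ⊗ b + (-1)^{[x][a]} a ⊗ [x,b]`. -/
def act2 (x : Lsa) (v : V) : V :=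
  x.sum fun i a => v.sum fun p c =>
    (a * c) •
      (((bk i p.1).sum fun k t => Finsupp.single (k, p.2) t)
        + sgn (par i * par p.1) • ((bk i p.2).sum fun k t => Finsupp.single (p.1, k) t))

/-- the adjoint diagonal action of `𝓛` on `𝓛 ⊗ 𝓛 ⊗ 𝓛`. -/
def act3 (x : Lsa) (w : W) : W :=
  x.sum fun i a => w.sum fun p c =>
    (a * c) •
      (((bk i p.1).sum fun k t => Finsupp.single (k, p.2.1, p.2.2) t)
        + sgn (par i * par p.1) •
            ((bk i p.2.1).sum fun k t => Finsupp.single (p.1, k, p.2.2) t)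
        + sgn (par i * (par p.1 + par p.2.1)) •
            ((bk i p.2.2).sum fun k t => Finsupp.single (p.1, p.2.1, k) t))

/-- the adjoint diagonal action of `𝓛` on the `n`-fold tensor power `𝓛^{⊗n}`,
realized as the free complex vector space on `n`-tuples of basis indices:
`x ∗ (a₁ ⊗ ⋯ ⊗ aₙ) = Σ_k (-1)^{[x]([a₁]+⋯+[a_{k-1}])} a₁ ⊗ ⋯ ⊗ [x,a_k] ⊗ ⋯ ⊗ aₙ`. -/
def actN (n : ℕ) (x : Lsa) (v : (Fin n → Idx) →₀ ℂ) : (Fin n → Idx) →₀ ℂ :=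
  x.sum fun i a => v.sum fun f c =>
    (a * c) •
      (Finset.univ.sum fun k : Fin n =>
        sgn (par i * ((Finset.univ.filter fun l => l < k).sum fun l => par (f l))) •
          ((bk i (f k)).sum fun j t => Finsupp.single (Function.update f k j) t))

/-- the super-twist map `τ : 𝓛 ⊗ 𝓛 → 𝓛 ⊗ 𝓛`, `τ(x ⊗ y) = (-1)^{[x][y]} y ⊗ x`. -/
def tau (v : V) : V :=
  v.sum fun p c => (sgn (par p.1 * par p.2) * c) • Finsupp.single (p.2, p.1) 1

/-- the image `Im(1⊗1 - τ) ⊂ 𝓛 ⊗ 𝓛`. -/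
def ImOneSubTau : Set V := Set.range fun v : V => v - tau v

/-- the super-cyclic map `ξ` on `𝓛 ⊗ 𝓛 ⊗ 𝓛`:
`ξ(x₁ ⊗ x₂ ⊗ x₃) = (-1)^{[x₁]([x₂]+[x₃])} x₂ ⊗ x₃ ⊗ x₁`. -/
def xi (w : W) : W :=
  w.sum fun p c =>
    (sgn (par p.1 * (par p.2.1 + par p.2.2)) * c) • Finsupp.single (p.2.1, p.2.2, p.1) 1

/-- `c(r) = [r¹², r¹³] + [r¹², r²³] + [r¹³, r²³] ∈ 𝓛 ⊗ 𝓛 ⊗ 𝓛` for `r ∈ 𝓛 ⊗ 𝓛`. -/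
def cYB (r : V) : W :=
  r.sum fun p a => r.sum fun q b =>
    (a * b) •
      (sgn (par q.1 * par p.2) •
          ((bk p.1 q.1).sum fun k t => Finsupp.single (k, p.2, q.2) t)
        + ((bk p.2 q.1).sum fun k t => Finsupp.single (p.1, k, q.2) t)
        + sgn (par q.1 * par p.2) •
            ((bk p.2 q.2).sum fun k t => Finsupp.single (p.1, q.1, k) t))

/-- `1 ⊗ D : 𝓛 ⊗ 𝓛 → 𝓛 ⊗ 𝓛 ⊗ 𝓛` for an even map `D : 𝓛 → 𝓛 ⊗ 𝓛`. -/
def oneTensorMap (D : Lsa → V) (v : V) : W :=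
  v.sum fun p c => c • ((D (e p.2)).sum fun q t => Finsupp.single (p.1, q.1, q.2) t)

/-- `r ∈ 𝓛 ⊗ 𝓛` is homogeneous of parity `ε ∈ ℤ₂`. -/
def IsParityV (ε : ZMod 2) (r : V) : Prop := ∀ p ∈ r.support, par p.1 + par p.2 = ε

/-- `r ∈ 𝓛 ⊗ 𝓛` is even (degree `0̄`). -/
def IsEvenV (r : V) : Prop := IsParityV 0 r

/-- `r` lies in the graded component `V_ι = Σ_{j+k=ι} 𝓛_j ⊗ 𝓛_k` of `V = 𝓛 ⊗ 𝓛`. -/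
def IsDegV (ι : ℚ) (r : V) : Prop := ∀ p ∈ r.support, qdeg p.1 + qdeg p.2 = ι

/-- the linear map `𝓛 → M` with the prescribed values on the basis. -/
def ofBasis {M : Type*} [AddCommMonoid M] [Module ℂ M] (g : Idx → M) : Lsa →ₗ[ℂ] M :=
  Finsupp.lsum ℂ fun i => LinearMap.toSpanSingleton ℂ M (g i)

/-- the inner super-derivation `a_inn` attached to `a ∈ 𝓛 ⊗ 𝓛` of parity `ε`:
`a_inn(x) = (-1)^{[a][x]} x ∗ a` for homogeneous `x`, extended linearly. -/
def innMap (ε : ZMod 2) (a : V) : Lsa →ₗ[ℂ] V :=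
  ofBasis fun i => sgn (ε * par i) • act2 (e i) a

/-- `d : 𝓛 → 𝓛 ⊗ 𝓛` is a super-derivation of parity `ε`:
`d(𝓛_ī) ⊆ V_{ī+ε}` and
`d([x,y]) = (-1)^{[d][x]} x ∗ d(y) - (-1)^{[y]([d]+[x])} y ∗ d(x)`
for homogeneous `x, y` (stated on basis elements and extended bilinearly). -/
def IsDerOfParity (ε : ZMod 2) (d : Lsa →ₗ[ℂ] V) : Prop :=
  (∀ i : Idx, IsParityV (par i + ε) (d (e i))) ∧
  (∀ i j : Idx,
    d (bk i j)
      = sgn (ε * par i) • act2 (e i) (d (e j))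
        - sgn (par j * (ε + par i)) • act2 (e j) (d (e i)))

/-- `d` is homogeneous of degree `ι ∈ (1/2)ℤ` with respect to the `(1/2)ℤ`-grading:
`d(𝓛_j) ⊆ V_{ι+j}`. -/
def IsDegHomogDer (ι : ℚ) (d : Lsa →ₗ[ℂ] V) : Prop :=
  ∀ i : Idx, IsDegV (ι + qdeg i) (d (e i))

/-- `D : 𝓛 → 𝓛 ⊗ 𝓛` defines a Lie super-bialgebra structure on `𝓛`: it is linear,
`D(𝓛_ī) ⊆ Σ_j 𝓛_j̄ ⊗ 𝓛_{ī-j̄}`, `Im D ⊆ Im(1⊗1-τ)`,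
`(1⊗1⊗1 + ξ + ξ²)(1 ⊗ D)D = 0`, and
`D([x,y]) = x ∗ D(y) - (-1)^{[x][y]} y ∗ D(x)`. -/
structure IsLieSuperBialgebraDelta (D : Lsa → V) : Prop where
  linear : IsLinearMap ℂ D
  parity : ∀ i : Idx, IsParityV (par i) (D (e i))
  skewIm : ∀ x : Lsa, D x ∈ ImOneSubTau
  coJacobi : ∀ x : Lsa,
    oneTensorMap D (D x) + xi (oneTensorMap D (D x)) + xi (xi (oneTensorMap D (D x))) = 0
  cocycle : ∀ i j : Idx,
    D (bk i j) = act2 (e i) (D (e j)) - sgn (par i * par j) • act2 (e j) (D (e i))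

/-!
Infinitely many of the Virasoro generators already detect every nonzero tensor. The bracket
`[L_m, e_i]` is a multiple, nonzero for all but at most one `m`, of a single basis vector whose
degree exceeds that of `e_i` by `m`. Hence, for `w ∈ 𝓛 ⊗ M` and all but finitely many `m`, the first
factor of `[L_m, e_i] ⊗ u` differs from all the first factors occurring in `w`. The corresponding
coefficients of `L_m ∗ w` then come from `[L_m, ·] ⊗ 1` alone, so `L_m ∗ w = 0` forces each
coefficient of `w` to vanish. Apply this to `M = 𝓛 ⊗ 𝓛` and `w = c(r)`.
-/

section TensorAct

variable {ι κ R : Type*} [Semiring R]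

/-- The operator `f ⊗ 1 + 1 ⊗ g` on the free module on `ι × κ`, where `f` and `g` are given by their
values on the bases. This is how an even element acts on a tensor product; no Koszul sign occurs. -/
def tensorAct (f : ι → ι →₀ R) (g : κ → κ →₀ R) (w : ι × κ →₀ R) : ι × κ →₀ R :=
  w.sum fun p c =>
    c • ((f p.1).mapDomain (fun i => (i, p.2)) + (g p.2).mapDomain (fun k => (p.1, k)))

theorem tensorAct_apply_of_forall_fst_ne (f : ι → ι →₀ R) (g : κ → κ →₀ R) {w : ι × κ →₀ R}
    {i : ι} (hi : ∀ p ∈ w.support, p.1 ≠ i) (k : κ) :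
    tensorAct f g w (i, k) = w.sum fun p c => c * (f p.1).mapDomain (fun j => (j, p.2)) (i, k) := by
  rw [tensorAct, Finsupp.sum_apply]
  refine Finset.sum_congr rfl fun p hp => ?_
  have second_factor_eq_zero : (g p.2).mapDomain (fun k => (p.1, k)) (i, k) = 0 :=
    Finsupp.mapDomain_of_notMem_range _ _ fun ⟨_, h⟩ => hi p hp (congrArg Prod.fst h)
  simp only [Finsupp.smul_apply, Finsupp.add_apply, second_factor_eq_zero, add_zero, smul_eq_mul]

theorem tensorAct_single_apply {σ : ι → ι} (hσ : σ.Injective) (a : ι → R) (g : κ → κ →₀ R)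
    {w : ι × κ →₀ R} {i : ι} (hi : ∀ p ∈ w.support, p.1 ≠ σ i) (k : κ) :
    tensorAct (fun j => Finsupp.single (σ j) (a j)) g w (σ i, k) = w (i, k) * a i := by
  classical
  rw [tensorAct_apply_of_forall_fst_ne _ _ hi, Finsupp.sum, Finset.sum_eq_single (i, k)]
  · rw [Finsupp.mapDomain_single, Finsupp.single_eq_same]
  · intro p _ hp
    have shifted_ne : (σ i, k) ≠ (σ p.1, p.2) := fun h =>
      hp (Prod.ext (hσ (congrArg Prod.fst h)).symm (congrArg Prod.snd h).symm)
    rw [Finsupp.mapDomain_single, Finsupp.single_eq_of_ne shifted_ne, mul_zero]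
  · intro h
    rw [Finsupp.notMem_support_iff.mp h, zero_mul]

end TensorAct

/-- The index of the basis vector of which `[L_m, e_i]` is a multiple. -/
def shiftIdx (m : ℤ) : Idx → Idx
  | .L n => .L (m + n)
  | .T k => .T (k + m)
  | .G n => .G (n + 2 * m)

/-- The coefficient of `[L_m, e_i]` at the basis vector indexed by `shiftIdx m i`. -/
def shiftCoeff (m : ℤ) : Idx → ℂ
  | .L n => (m : ℂ) - n
  | .T k => -((k : ℂ) + 1 / 2)
  | .G n => ((m : ℂ) - n) / 2

theorem bk_L (m : ℤ) (i : Idx) :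
    bk (.L m) i = Finsupp.single (shiftIdx m i) (shiftCoeff m i) := by
  cases i <;> simp [bk, shiftIdx, shiftCoeff, e]

theorem shiftIdx_injective (m : ℤ) : Function.Injective (shiftIdx m) := by
  intro i j h
  cases i <;> cases j <;> simp_all [shiftIdx]

theorem shiftIdx_left_injective (i : Idx) : Function.Injective fun m => shiftIdx m i := by
  intro m n h
  cases i <;> simp_all [shiftIdx]

theorem finite_setOf_shiftCoeff_eq_zero (i : Idx) : {m : ℤ | shiftCoeff m i = 0}.Finite := by
  cases i with
  | L n => simp [shiftCoeff, sub_eq_zero]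
  | G n => simp [shiftCoeff, sub_eq_zero]
  | T k =>
    have half_integer_ne_zero : (k : ℂ) + 1 / 2 ≠ 0 := by
      intro h
      have : 2 * k + 1 = 0 := by
        exact_mod_cast (by linear_combination 2 * h : 2 * (k : ℂ) + 1 = 0)
      omega
    simp only [shiftCoeff, neg_eq_zero, half_integer_ne_zero, Set.ofPred_false, Set.finite_empty]

theorem eq_zero_of_infinite_tensorAct_bk_L {κ : Type*} (g : ℤ → κ → κ →₀ ℂ) {w : Idx × κ →₀ ℂ}
    (hw : {m : ℤ | tensorAct (bk (.L m)) (g m) w = 0}.Infinite) : w = 0 := by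
  ext ⟨i, k⟩
  have finite_collisions : {m | shiftIdx m i ∈ Prod.fst '' (w.support : Set (Idx × κ))}.Finite :=
    (w.support.finite_toSet.image Prod.fst).preimage (shiftIdx_left_injective i).injOn
  obtain ⟨m, hm, hgood⟩ :=
    (hw.sdiff (finite_collisions.union (finite_setOf_shiftCoeff_eq_zero i))).nonempty
  obtain ⟨hfresh, hcoeff⟩ := not_or.mp hgood
  have coeff_eq : tensorAct (bk (.L m)) (g m) w (shiftIdx m i, k) = w (i, k) * shiftCoeff m i := by
    rw [funext (bk_L m)]
    exact tensorAct_single_apply (shiftIdx_injective m) _ _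
      (fun p hp h => hfresh ⟨p, hp, h⟩) k
  rw [Set.mem_ofPred_eq.mp hm, Finsupp.zero_apply] at coeff_eq
  exact (mul_eq_zero.mp coeff_eq.symm).resolve_right hcoeff

theorem act3_zero (x : Lsa) : act3 x 0 = 0 := by
  simp [act3]

theorem act3_L_eq_tensorAct (m : ℤ) (w : W) :
    act3 (e (.L m)) w =
      tensorAct (bk (.L m)) (fun q => act2 (e (.L m)) (Finsupp.single q 1)) w := by
  simp [act3, act2, tensorAct, e, bk_L, par, sgn, Finsupp.mapDomain_add, add_assoc]

theorem eq_zero_of_infinite_act3_L {w : W}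
    (hw : {m : ℤ | act3 (e (.L m)) w = 0}.Infinite) : w = 0 :=
  eq_zero_of_infinite_tensorAct_bk_L _ (by simpa only [act3_L_eq_tensorAct] using hw)

theorem CYBE_iff_MYBE_general (r : V) :
    cYB r = 0 ↔ ∀ x : Lsa, act3 x (cYB r) = 0 := by
  refine ⟨fun h x => by rw [h, act3_zero], fun h => eq_zero_of_infinite_act3_L ?_⟩
  simpa only [h, Set.ofPred_true] using Set.infinite_univ (α := ℤ)

/-- An element `r ∈ Im(1⊗1 - τ) ⊂ 𝓛 ⊗ 𝓛` satisfies the classical Yang–Baxter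
equation `c(r) = 0` iff it satisfies the modified Yang–Baxter equation
`x ∗ c(r) = 0` for all `x ∈ 𝓛`. -/
theorem CYBE_iff_MYBE (r : V) (hr : r ∈ ImOneSubTau) :
    cYB r = 0 ↔ ∀ x : Lsa, act3 x (cYB r) = 0 :=
  CYBE_iff_MYBE_general r

end
end N2
end

section
/- Let L be the centerless twisted N=2 superconformal algebra and V = L ⊗ L the L-module under the adjoint diagonal action. Then every super-derivation from L to V is inner: Der(L, V) = Inn(L, V), equivalently the first cohomology group H¹(L, V) = Der(L, V)/Inn(L, V) vanishes. -/
namespace N2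

noncomputable section

/-!
The algebra is generated by `G 0`, `T 0` and `T (-1)`, so a derivation is determined by its values
on these three elements. Elements of `V` have finite support, so a sequence of coefficients along an
antidiagonal vanishes as soon as it satisfies a linear recurrence.

For an odd derivation `d`, the operator `T 0` acts bijectively on the odd part of `V`, so an inner
derivation corrects `d (T 0)` to zero, and then `d` vanishes on the generators.

For an even derivation `d`, the action of `L 0` is diagonal and invertible off weight zero, so an
inner derivation corrects `d (L 0)` to weight zero, where it is invariant and hence zero. Since
`[G 0, G 0] = 2 L 0`, the element `G 0` now kills `d (G 0)`, and a contracting homotopy `h` of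
`ad (G 0)` gives `d (G 0) = G 0 • (h ⊗ 1) (d (G 0))`, which is inner. Finally, the elements
`G 0 • b` with `b` odd of weight zero are killed by `G 0`, and `b` can be chosen so that
`T 0 • G 0 • b` matches enough coefficients of `d (T 0)` for the relations between `d (T 0)` and
`d (T (-1))` to make the difference vanish.
-/

/-- The weight of a basis vector: twice its degree `qdeg`, so that weights are integers. -/
def wt : Idx → ℤ
  | .L m => 2 * m
  | .T k => 2 * k + 1
  | .G n => n

theorem sgn_zero : sgn 0 = 1 := if_pos rfl

theorem sgn_one : sgn 1 = -1 := if_neg one_ne_zero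

theorem eq_zero_or_eq_one (a : ZMod 2) : a = 0 ∨ a = 1 := by
  revert a
  decide

theorem sgn_add (a b : ZMod 2) : sgn (a + b) = sgn a * sgn b := by
  rcases eq_zero_or_eq_one a with rfl | rfl <;> rcases eq_zero_or_eq_one b with rfl | rfl <;>
    simp [sgn, CharTwo.add_self_eq_zero]

theorem sgn_mul_self (a : ZMod 2) : sgn a * sgn a = 1 := by
  rw [← sgn_add, CharTwo.add_self_eq_zero, sgn_zero]

theorem Idx.eq_of_par_eq_of_wt_eq {a b : Idx} (hp : par a = par b) (hw : wt a = wt b) :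
    a = b := by
  cases a <;> cases b <;> simp_all [par, wt] <;> omega

theorem bk_L_L (m n : ℤ) : bk (.L m) (.L n) = ((m : ℂ) - n) • e (.L (m + n)) := rfl

theorem bk_L_T (m k : ℤ) : bk (.L m) (.T k) = (-((k : ℂ) + 1 / 2)) • e (.T (k + m)) := rfl

theorem bk_L_G (m n : ℤ) : bk (.L m) (.G n) = (((m : ℂ) - n) / 2) • e (.G (n + 2 * m)) := rfl

theorem bk_T_L (k m : ℤ) : bk (.T k) (.L m) = ((k : ℂ) + 1 / 2) • e (.T (k + m)) := rfl

theorem bk_T_T (k j : ℤ) : bk (.T k) (.T j) = 0 := rfl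

theorem bk_T_G (k n : ℤ) : bk (.T k) (.G n) = e (.G (n + 2 * k + 1)) := rfl

theorem bk_G_L (n m : ℤ) : bk (.G n) (.L m) = (-((m : ℂ) - n) / 2) • e (.G (n + 2 * m)) := rfl

theorem bk_G_T (n k : ℤ) : bk (.G n) (.T k) = -e (.G (n + 2 * k + 1)) := rfl

theorem bk_G_even_G_even (m n : ℤ) : bk (.G (2 * m)) (.G (2 * n)) = (2 : ℂ) • e (.L (m + n)) := by
  rw [bk, if_pos (by omega), Even.neg_one_zpow (even_two_mul m), one_mul]
  congr 3
  omega

theorem bk_G_odd_G_odd (m n : ℤ) :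
    bk (.G (2 * m + 1)) (.G (2 * n + 1)) = (-2 : ℂ) • e (.L (m + n + 1)) := by
  rw [bk, if_pos (by omega), Odd.neg_one_zpow (odd_two_mul_add_one m), neg_one_mul]
  congr 3
  omega

theorem bk_G_even_G_odd (m n : ℤ) :
    bk (.G (2 * m)) (.G (2 * n + 1)) = ((n : ℂ) - m + 1 / 2) • e (.T (m + n)) := by
  rw [bk, if_neg (by omega), Odd.neg_one_zpow (odd_two_mul_add_one m)]
  congr 3
  · push_cast; ring
  · omega

theorem bk_G_odd_G_even (m n : ℤ) :
    bk (.G (2 * m + 1)) (.G (2 * n)) = ((m : ℂ) - n + 1 / 2) • e (.T (m + n)) := by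
  rw [bk, if_neg (by omega), Even.neg_one_zpow (by exact ⟨m + 1, by ring⟩)]
  congr 3
  · push_cast; ring
  · omega

theorem bk_eq_smul (i a : Idx) :
    ∃ (c : ℂ) (k : Idx), bk i a = c • e k ∧ par k = par i + par a ∧ wt k = wt i + wt a := by
  rcases i with m | m | m <;> rcases a with n | n | n
  case T.T => exact ⟨0, .L (m + n + 1), by simp [bk], rfl, by simp only [wt]; ring⟩
  case T.G => exact ⟨1, _, (one_smul ℂ _).symm, rfl, by simp only [wt]; ring⟩
  case G.T => exact ⟨-1, _, (neg_one_smul ℂ _).symm, rfl, by simp only [wt]; ring⟩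
  case G.L => exact ⟨_, _, rfl, rfl, rfl⟩
  case G.G =>
    by_cases h : (m + n) % 2 = 0
    · exact ⟨_, _, if_pos h, rfl, by simp only [wt]; omega⟩
    · exact ⟨_, _, if_neg h, rfl, by simp only [wt]; omega⟩
  all_goals exact ⟨_, _, rfl, rfl, by simp only [wt]; ring⟩

/-- `w` is compatible with the bracket: `[e i, e a]` is a combination of basis vectors `e p` with
`w p = w i + w a`. -/
def IsGrading {A : Type*} [Add A] (w : Idx → A) : Prop :=
  ∀ ⦃i a p : Idx⦄, bk i a p ≠ 0 → w p = w i + w a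

theorem par_wt_eq_of_bk_apply_ne_zero {i a p : Idx} (h : bk i a p ≠ 0) :
    par p = par i + par a ∧ wt p = wt i + wt a := by
  obtain ⟨c, k, hk, hpar, hwt⟩ := bk_eq_smul i a
  obtain rfl : k = p := by
    by_contra hne
    simp [hk, e, hne] at h
  exact ⟨hpar, hwt⟩

theorem isGrading_par : IsGrading par := fun _ _ _ h ↦ (par_wt_eq_of_bk_apply_ne_zero h).1

theorem isGrading_wt : IsGrading wt := fun _ _ _ h ↦ (par_wt_eq_of_bk_apply_ne_zero h).2

@[simp]
theorem ofBasis_e {M : Type*} [AddCommMonoid M] [Module ℂ M] (g : Idx → M) (i : Idx) :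
    ofBasis g (e i) = g i := by
  simp [ofBasis, e]

theorem hom_ext_e {M : Type*} [AddCommMonoid M] [Module ℂ M] {f g : Lsa →ₗ[ℂ] M}
    (h : ∀ i, f (e i) = g (e i)) : f = g :=
  Finsupp.lhom_ext' fun i ↦ LinearMap.ext_ring (h i)

/-- The adjoint representation, `ad x y = [x, y]`. -/
def ad : Lsa →ₗ[ℂ] Lsa →ₗ[ℂ] Lsa := ofBasis fun i ↦ ofBasis (bk i)

@[simp]
theorem ad_e_e (i a : Idx) : ad (e i) (e a) = bk i a := by
  simp [ad]

theorem ad_e_apply {i a p : Idx} (hpar : par p = par i + par a) (hwt : wt p = wt i + wt a)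
    (u : Lsa) : ad (e i) u p = bk i a p * u a := by
  have hsum : ad (e i) u p = u.sum fun b c ↦ c * bk i b p := by
    simp [ad, ofBasis, Finsupp.lsum_apply, Finsupp.sum, e]
  rw [hsum, Finsupp.sum_eq_single a, mul_comm]
  · intro b _ hba
    by_contra hne
    obtain ⟨hpar', hwt'⟩ := par_wt_eq_of_bk_apply_ne_zero (right_ne_zero_of_mul hne)
    exact hba (Idx.eq_of_par_eq_of_wt_eq (add_left_cancel (hpar'.symm.trans hpar))
      (add_left_cancel (hwt'.symm.trans hwt)))
  · simp

section Coefficients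

variable (k n m j : ℤ) (u : Lsa)

theorem ad_T_apply_L : ad (e (.T k)) u (.L m) = 0 := by
  rw [ad_e_apply (a := .T (m - k - 1)) rfl (by simp only [wt]; ring)]
  simp [bk]

theorem ad_T_apply_T : ad (e (.T k)) u (.T j) = (k + 1 / 2) * u (.L (j - k)) := by
  rw [ad_e_apply (a := .L (j - k)) rfl (by simp only [wt]; ring)]
  simp [bk, e]

theorem ad_T_apply_G : ad (e (.T k)) u (.G n) = u (.G (n - 2 * k - 1)) := by
  rw [ad_e_apply (a := .G (n - 2 * k - 1)) rfl (by simp only [wt]; ring)]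
  simp [bk, e, show n - 2 * k - 1 + 2 * k + 1 = n by ring]

theorem ad_G_apply_L : ad (e (.G n)) u (.L m) = (-1) ^ n * 2 * u (.G (2 * m - n)) := by
  rw [ad_e_apply (a := .G (2 * m - n)) rfl (by simp only [wt]; ring)]
  simp [bk, e]

theorem ad_G_apply_T :
    ad (e (.G n)) u (.T j) = (-1) ^ (n + 1) * (n - j - 1 / 2) * u (.G (2 * j + 1 - n)) := by
  rw [ad_e_apply (a := .G (2 * j + 1 - n)) rfl (by simp only [wt]; ring)]
  simp only [bk, e, if_neg (show ¬ (n + (2 * j + 1 - n)) % 2 = 0 by omega),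
    show (n + (2 * j + 1 - n) - 1) / 2 = j by omega, Finsupp.smul_apply, Finsupp.single_eq_same]
  push_cast
  ring

theorem ad_G_apply_G_add_two_mul :
    ad (e (.G n)) u (.G (n + 2 * m)) = (n - m) / 2 * u (.L m) := by
  rw [ad_e_apply (a := .L m) rfl rfl]
  simp [bk, e]

theorem ad_G_apply_G_add_two_mul_add_one :
    ad (e (.G n)) u (.G (n + 2 * k + 1)) = -u (.T k) := by
  rw [ad_e_apply (a := .T k) rfl (by simp only [wt]; ring)]
  simp [bk, e]

theorem ad_L_zero_apply (p : Idx) : ad (e (.L 0)) u p = -(wt p / 2) * u p := by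
  rw [ad_e_apply (a := p) (by simp [par]) (by simp [wt])]
  congr 1
  cases p <;> simp [bk, e, wt] <;> ring

end Coefficients

/-! ### The tensor square as a module -/

/-- The graded component of degree `n` of `V`, for a grading `w` of the basis vectors. -/
def graded {A : Type*} [Add A] (w : Idx → A) (n : A) : Submodule ℂ V :=
  Finsupp.supported ℂ ℂ {p | w p.1 + w p.2 = n}

theorem isParityV_iff_mem_graded {ε : ZMod 2} {v : V} : IsParityV ε v ↔ v ∈ graded par ε :=
  Iff.rfl

theorem apply_eq_zero_of_mem_graded {A : Type*} [Add A] {w : Idx → A} {n : A} {v : V}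
    (hv : v ∈ graded w n) {p q : Idx} (h : w p + w q ≠ n) : v (p, q) = 0 :=
  (Finsupp.mem_supported' ℂ v).1 hv (p, q) h

/-- The pure tensor `x ⊗ y ∈ V`. -/
def tens : Lsa →ₗ[ℂ] Lsa →ₗ[ℂ] V :=
  (TensorProduct.mk ℂ Lsa Lsa).compr₂ (finsuppTensorFinsupp' ℂ Idx Idx).toLinearMap

theorem tens_apply (x y : Lsa) (p q : Idx) : tens x y (p, q) = x p * y q :=
  finsuppTensorFinsupp'_apply_apply ..

theorem tens_e_e (a b : Idx) : tens (e a) (e b) = Finsupp.single (a, b) 1 := by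
  simp [tens, e]

theorem hom_ext_tens {M : Type*} [AddCommMonoid M] [Module ℂ M] {f g : V →ₗ[ℂ] M}
    (h : ∀ a b, f (tens (e a) (e b)) = g (tens (e a) (e b))) : f = g :=
  Finsupp.lhom_ext' fun p ↦ LinearMap.ext_ring (by simpa [tens_e_e] using h p.1 p.2)

theorem graded_eq_span {A : Type*} [Add A] (w : Idx → A) (n : A) :
    graded w n = Submodule.span ℂ {v | ∃ a b, w a + w b = n ∧ tens (e a) (e b) = v} := by
  rw [graded, Finsupp.supported_eq_span_single]
  congr 1
  ext v
  simp [tens_e_e]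

theorem tens_e_e_mem_graded {A : Type*} [Add A] {w : Idx → A} {n : A} {a b : Idx}
    (h : w a + w b = n) : tens (e a) (e b) ∈ graded w n := by
  rw [graded_eq_span]
  exact Submodule.subset_span ⟨a, b, h, rfl⟩

/-- The adjoint diagonal action of `Lsa` on `V`; it is `act2` in bilinear form. -/
def act : Lsa →ₗ[ℂ] V →ₗ[ℂ] V :=
  ofBasis fun i ↦ Finsupp.linearCombination ℂ fun p : Idx × Idx ↦
    tens (bk i p.1) (e p.2) + sgn (par i * par p.1) • tens (e p.1) (bk i p.2)

theorem act_e_tens_e_e (i a b : Idx) :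
    act (e i) (tens (e a) (e b))
      = tens (bk i a) (e b) + sgn (par i * par a) • tens (e a) (bk i b) := by
  simp [act, tens_e_e]

theorem tens_e_right_eq_sum (x : Lsa) (b : Idx) :
    tens x (e b) = x.sum fun k t ↦ Finsupp.single (k, b) t := by
  conv_lhs => rw [← Finsupp.sum_single x]
  simp [tens, e, Finsupp.sum]

theorem tens_e_left_eq_sum (a : Idx) (y : Lsa) :
    tens (e a) y = y.sum fun k t ↦ Finsupp.single (a, k) t := by
  conv_lhs => rw [← Finsupp.sum_single y]
  simp [tens, e, Finsupp.sum]

theorem act2_e (i : Idx) (v : V) : act2 (e i) v = act (e i) v := by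
  simp only [act2, ← tens_e_right_eq_sum, ← tens_e_left_eq_sum]
  rw [act, ofBasis_e, Finsupp.linearCombination_apply, e, Finsupp.sum_single_index (by simp)]
  simp only [one_mul]

theorem tens_mem_graded {A : Type*} [Add A] {w : Idx → A} {m n : A} {x y : Lsa}
    (hx : ∀ p, x p ≠ 0 → w p = m) (hy : ∀ p, y p ≠ 0 → w p = n) :
    tens x y ∈ graded w (m + n) := by
  rintro ⟨p, q⟩ h
  have hne : tens x y (p, q) ≠ 0 := Finsupp.mem_support_iff.1 h
  rw [tens_apply] at hne
  rw [Set.mem_ofPred_eq, hx p (left_ne_zero_of_mul hne), hy q (right_ne_zero_of_mul hne)]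

theorem act_e_mem_graded {A : Type*} [AddCommMonoid A] {w : Idx → A} (hw : IsGrading w)
    (i : Idx) {n : A} {v : V} (hv : v ∈ graded w n) : act (e i) v ∈ graded w (w i + n) := by
  have he : ∀ a p : Idx, e a p ≠ 0 → w p = w a := by
    intro a p h
    rw [(Finsupp.single_apply_ne_zero.1 h).1]
  suffices graded w n ≤ (graded w (w i + n)).comap (act (e i)) from this hv
  rw [graded_eq_span, Submodule.span_le]
  rintro _ ⟨a, b, rfl, rfl⟩
  rw [SetLike.mem_coe, Submodule.mem_comap, act_e_tens_e_e]
  refine add_mem ?_ (Submodule.smul_mem _ _ ?_)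
  · rw [← add_assoc]
    exact tens_mem_graded (fun p h ↦ hw h) (he b)
  · rw [add_left_comm]
    exact tens_mem_graded (he a) (fun p h ↦ hw h)

/-- The homogeneous elements of `Lsa` of parity `ε`. -/
def homog (ε : ZMod 2) : Submodule ℂ Lsa :=
  Finsupp.supported ℂ ℂ {k | par k = ε}

theorem homog_eq_span (ε : ZMod 2) :
    homog ε = Submodule.span ℂ {x | ∃ i, par i = ε ∧ e i = x} :=
  Finsupp.supported_eq_span_single ℂ _

theorem e_mem_homog (i : Idx) : e i ∈ homog (par i) :=
  Finsupp.single_mem_supported ℂ 1 rfl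

theorem bk_mem_homog (i j : Idx) : bk i j ∈ homog (par i + par j) :=
  fun _ h ↦ isGrading_par (Finsupp.mem_support_iff.1 h)

theorem act_tens {ε δ : ZMod 2} {x y : Lsa} (hx : x ∈ homog ε) (hy : y ∈ homog δ) (z : Lsa) :
    act x (tens y z) = tens (ad x y) z + sgn (ε * δ) • tens y (ad x z) := by
  rw [homog_eq_span] at hx hy
  induction hx using Submodule.span_induction with
  | zero => simp
  | add x x' _ _ hx hx' => simp only [map_add, LinearMap.add_apply, hx, hx']; module
  | smul c x _ hx => simp only [map_smul, LinearMap.smul_apply, hx]; module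
  | mem x hx =>
    obtain ⟨i, rfl, rfl⟩ := hx
    induction hy using Submodule.span_induction with
    | zero => simp
    | add y y' _ _ hy hy' => simp only [map_add, LinearMap.add_apply, hy, hy']; module
    | smul c y _ hy => simp only [map_smul, LinearMap.smul_apply, hy]; module
    | mem y hy =>
      obtain ⟨a, rfl, rfl⟩ := hy
      refine LinearMap.congr_fun (f := act (e i) ∘ₗ tens (e a))
        (g := tens (ad (e i) (e a)) + sgn (par i * par a) • tens (e a) ∘ₗ ad (e i)) ?_ z
      refine hom_ext_e fun b ↦ ?_
      simp [act_e_tens_e_e]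

@[elab_as_elim]
theorem Idx.cases_parity {P : Idx → Prop} (L : ∀ m, P (.L m)) (T : ∀ k, P (.T k))
    (G_even : ∀ m, P (.G (2 * m))) (G_odd : ∀ m, P (.G (2 * m + 1))) (i : Idx) : P i := by
  rcases i with m | k | n
  · exact L m
  · exact T k
  · obtain ⟨m, rfl | rfl⟩ := Int.even_or_odd' n
    · exact G_even m
    · exact G_odd m

theorem ad_bk_e (i j k : Idx) :
    ad (bk i j) (e k) = ad (e i) (bk j k) - sgn (par i * par j) • ad (e j) (bk i k) := by
  have odd_add_even (a b : ℤ) : 2 * a + 1 + 2 * b = 2 * (a + b) + 1 := by ring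
  have even_add_even (a b : ℤ) : 2 * a + 2 * b = 2 * (a + b) := by ring
  have odd_add_one (a : ℤ) : 2 * a + 1 + 1 = 2 * (a + 1) := by ring
  induction i using Idx.cases_parity <;> induction j using Idx.cases_parity <;>
    induction k using Idx.cases_parity <;>
  · simp only [bk_G_even_G_even, bk_G_even_G_odd, bk_G_odd_G_even, bk_G_odd_G_odd, bk_L_L,
      bk_L_T, bk_L_G, bk_T_L, bk_T_T, bk_T_G, bk_G_L, bk_G_T, map_smul, map_neg, map_zero,
      LinearMap.smul_apply, LinearMap.neg_apply, LinearMap.zero_apply, ad_e_e, odd_add_even,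
      even_add_even, odd_add_one, par, mul_zero, mul_one, sgn_zero, sgn_one]
    push_cast
    try ring_nf
    try module

theorem act_bk (i j : Idx) (v : V) :
    act (bk i j) v
      = act (e i) (act (e j) v) - sgn (par i * par j) • act (e j) (act (e i) v) := by
  refine LinearMap.congr_fun (f := act (bk i j))
    (g := act (e i) ∘ₗ act (e j) - sgn (par i * par j) • act (e j) ∘ₗ act (e i)) ?_ v
  refine hom_ext_tens fun a b ↦ ?_
  simp only [LinearMap.sub_apply, LinearMap.smul_apply, LinearMap.comp_apply,
    act_tens (bk_mem_homog i j) (e_mem_homog a), map_add, map_smul,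
    act_tens (e_mem_homog _) (bk_mem_homog _ _), act_tens (e_mem_homog _) (e_mem_homog _), ad_bk_e,
    ad_e_e, map_sub, mul_add, add_mul, sgn_add, mul_comm (par j) (par i)]
  have hsq := sgn_mul_self (par i * par j)
  match_scalars
  · ring
  · ring
  · ring
  · ring
  · ring
  · linear_combination sgn (par j * par a) * hsq

/-- The coefficient of `· ⊗ e q`. -/
def leftSlice (q : Idx) : V →ₗ[ℂ] Lsa :=
  Finsupp.lcomapDomain (fun p ↦ (p, q)) (Prod.mk_left_injective q)

/-- The coefficient of `e p ⊗ ·`. -/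
def rightSlice (p : Idx) : V →ₗ[ℂ] Lsa :=
  Finsupp.lcomapDomain (fun q ↦ (p, q)) (Prod.mk_right_injective p)

@[simp]
theorem leftSlice_apply (p q : Idx) (v : V) : leftSlice q v p = v (p, q) := rfl

@[simp]
theorem rightSlice_apply (p q : Idx) (v : V) : rightSlice p v q = v (p, q) := rfl

theorem act_e_apply (i p q : Idx) (v : V) :
    act (e i) v (p, q)
      = ad (e i) (leftSlice q v) p + sgn (par i * par p) * ad (e i) (rightSlice p v) q := by
  refine LinearMap.congr_fun (f := Finsupp.lapply (p, q) ∘ₗ act (e i))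
    (g := Finsupp.lapply p ∘ₗ ad (e i) ∘ₗ leftSlice q
      + sgn (par i * par p) • Finsupp.lapply q ∘ₗ ad (e i) ∘ₗ rightSlice p) ?_ v
  refine hom_ext_tens fun a b ↦ ?_
  have hleft : leftSlice q (tens (e a) (e b)) = e b q • e a := by
    ext k
    simp [tens_apply, mul_comm]
  have hright : rightSlice p (tens (e a) (e b)) = e a p • e b := by
    ext k
    simp [tens_apply]
  rcases eq_or_ne a p with rfl | hap
  · simp [act_e_tens_e_e, hleft, hright, tens_apply, mul_comm]
  · have he : e a p = 0 := Finsupp.single_eq_of_ne hap.symm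
    simp [act_e_tens_e_e, hleft, hright, tens_apply, mul_comm, he]

/-! ### Derivations -/

theorem eq_zero_of_recurrence {R : Type*} [Semiring R] {u : ℤ →₀ R} (α β : R)
    (h : ∀ n, u (n + 1) = α * u n + β * u (n - 1)) : u = 0 := by
  by_contra hne
  obtain ⟨m, hm, hmin⟩ := Finset.exists_min_image _ id (Finsupp.support_nonempty_iff.2 hne)
  have hlt (k : ℤ) (hk : k < m) : u k = 0 := by
    by_contra hk0
    exact hk.not_ge (hmin k (Finsupp.mem_support_iff.2 hk0))
  have hrec := h (m - 1)
  rw [sub_add_cancel, hlt (m - 1) (by omega), hlt (m - 1 - 1) (by omega), mul_zero, mul_zero,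
    add_zero] at hrec
  exact Finsupp.mem_support_iff.1 hm hrec

theorem intCast_add_half_ne_zero {K : Type*} [Field K] [CharZero K] (k : ℤ) :
    (k : K) + 1 / 2 ≠ 0 := by
  intro h
  have h' : ((k * 2 + 1 : ℤ) : K) = 0 := by
    push_cast
    linear_combination 2 * h
  have := Int.cast_eq_zero.1 h'
  omega

theorem isDerOfParity_iff {ε : ZMod 2} {d : Lsa →ₗ[ℂ] V} :
    IsDerOfParity ε d ↔ (∀ i, d (e i) ∈ graded par (par i + ε)) ∧
      ∀ i j, d (bk i j) = sgn (ε * par i) • act (e i) (d (e j))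
        - sgn (par j * (ε + par i)) • act (e j) (d (e i)) := by
  simp only [IsDerOfParity, act2_e, isParityV_iff_mem_graded]

/-- The derivations `Lsa → V` of parity `ε`. -/
def der (ε : ZMod 2) : Submodule ℂ (Lsa →ₗ[ℂ] V) where
  carrier := {d | IsDerOfParity ε d}
  zero_mem' := isDerOfParity_iff.2 (by simp)
  add_mem' {d d'} hd hd' := by
    rw [Set.mem_ofPred_eq, isDerOfParity_iff] at *
    refine ⟨fun i ↦ add_mem (hd.1 i) (hd'.1 i), fun i j ↦ ?_⟩
    simp only [LinearMap.add_apply, hd.2, hd'.2, map_add]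
    module
  smul_mem' c d hd := by
    rw [Set.mem_ofPred_eq, isDerOfParity_iff] at *
    refine ⟨fun i ↦ Submodule.smul_mem _ c (hd.1 i), fun i j ↦ ?_⟩
    simp only [LinearMap.smul_apply, hd.2, map_smul]
    module

theorem innMap_e (ε : ZMod 2) (a : V) (i : Idx) :
    innMap ε a (e i) = sgn (ε * par i) • act (e i) a := by
  rw [innMap, ofBasis_e, act2_e]

/-- `innMap ε` as a linear map; on elements of parity `ε` it is `a ↦ a_inn`. -/
def innHom (ε : ZMod 2) : V →ₗ[ℂ] Lsa →ₗ[ℂ] V where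
  toFun := innMap ε
  map_add' a b := hom_ext_e fun i ↦ by simp [innMap_e]
  map_smul' c a := hom_ext_e fun i ↦ by simp [innMap_e, smul_comm c]

/-- The inner derivations `Lsa → V` of parity `ε`. -/
def inn (ε : ZMod 2) : Submodule ℂ (Lsa →ₗ[ℂ] V) :=
  (graded par ε).map (innHom ε)

theorem innMap_mem_inn {ε : ZMod 2} {a : V} (ha : a ∈ graded par ε) : innMap ε a ∈ inn ε :=
  ⟨a, ha, rfl⟩

theorem inn_le_der (ε : ZMod 2) : inn ε ≤ der ε := by
  rintro _ ⟨a, ha, rfl⟩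
  refine isDerOfParity_iff.2 ⟨fun i ↦ ?_, fun i j ↦ ?_⟩
  · exact (innMap_e ε a i).symm ▸ Submodule.smul_mem _ _ (act_e_mem_graded isGrading_par i ha)
  · change innMap ε a (bk i j) = sgn (ε * par i) • act (e i) (innMap ε a (e j))
      - sgn (par j * (ε + par i)) • act (e j) (innMap ε a (e i))
    obtain ⟨c, k, hbk, hpar, -⟩ := bk_eq_smul i j
    have hk : innMap ε a (bk i j) = sgn (ε * (par i + par j)) • act (bk i j) a := by
      rw [hbk, map_smul, innMap_e, hpar, map_smul, LinearMap.smul_apply, smul_comm]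
    rw [hk, act_bk, innMap_e, innMap_e, map_smul, map_smul]
    simp only [mul_add, add_mul, sgn_add, mul_comm (par j)]
    module

section Derivation

variable {ε : ZMod 2} {d : Lsa →ₗ[ℂ] V}

theorem sub_mem_der {d' : Lsa →ₗ[ℂ] V} (hd : d ∈ der ε) (hd' : d' ∈ der ε) : d - d' ∈ der ε :=
  Submodule.sub_mem (M := Lsa →ₗ[ℂ] V) _ hd hd'

theorem apply_bk_eq_zero_of_mem_der (hd : d ∈ der ε) {i j : Idx} (hi : d (e i) = 0)
    (hj : d (e j) = 0) : d (bk i j) = 0 := by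
  rw [(isDerOfParity_iff.1 hd).2 i j, hi, hj]
  simp

theorem eq_zero_of_apply_generators_eq_zero (hd : d ∈ der ε) (hG : d (e (.G 0)) = 0)
    (hT : d (e (.T 0)) = 0) (hT' : d (e (.T (-1))) = 0) : d = 0 := by
  have hGn (n : ℤ) : d (e (.G n)) = 0 := by
    induction n with
    | zero => exact hG
    | succ n ih => simpa [bk_T_G] using apply_bk_eq_zero_of_mem_der hd hT ih
    | pred n ih => simpa [bk_T_G, sub_eq_add_neg, add_assoc] using
        apply_bk_eq_zero_of_mem_der hd hT' ih
  refine hom_ext_e fun i ↦ ?_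
  rw [LinearMap.zero_apply]
  rcases i with m | k | n
  · have h := apply_bk_eq_zero_of_mem_der hd (hGn (2 * 0)) (hGn (2 * m))
    rw [bk_G_even_G_even, map_smul, zero_add] at h
    exact (smul_eq_zero_iff_right two_ne_zero).1 h
  · have h := apply_bk_eq_zero_of_mem_der hd (hGn (2 * 0)) (hGn (2 * k + 1))
    rw [bk_G_even_G_odd, map_smul, zero_add] at h
    rw [Int.cast_zero, sub_zero] at h
    exact (smul_eq_zero_iff_right (intCast_add_half_ne_zero k)).1 h
  · exact hGn n

end Derivation

/-! ### Odd derivations -/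

theorem eq_zero_of_mem_graded_par_zero {v : V} (hv : v ∈ graded par 0)
    (hLL : ∀ m n, v (.L m, .L n) = 0) (hLT : ∀ m n, v (.L m, .T n) = 0)
    (hTL : ∀ m n, v (.T m, .L n) = 0) (hTT : ∀ m n, v (.T m, .T n) = 0)
    (hGG : ∀ m n, v (.G m, .G n) = 0) : v = 0 := by
  ext ⟨a | a | a, b | b | b⟩ <;> try (refine apply_eq_zero_of_mem_graded hv ?_; simp [par]; done)
  case L.L => exact hLL a b
  case L.T => exact hLT a b
  case T.L => exact hTL a b
  case T.T => exact hTT a b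
  case G.G => exact hGG a b

theorem eq_zero_of_mem_graded_par_one {v : V} (hv : v ∈ graded par 1)
    (hLG : ∀ m n, v (.L m, .G n) = 0) (hTG : ∀ m n, v (.T m, .G n) = 0)
    (hGL : ∀ m n, v (.G m, .L n) = 0) (hGT : ∀ m n, v (.G m, .T n) = 0) : v = 0 := by
  ext ⟨a | a | a, b | b | b⟩ <;> try (refine apply_eq_zero_of_mem_graded hv ?_; simp [par]; done)
  case L.G => exact hLG a b
  case T.G => exact hTG a b
  case G.L => exact hGL a b
  case G.T => exact hGT a b

theorem act_T_apply (k : ℤ) (p q : Idx) (v : V) :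
    act (e (.T k)) v (p, q)
      = ad (e (.T k)) (leftSlice q v) p + ad (e (.T k)) (rightSlice p v) q := by
  simp [act_e_apply, par, sgn_zero]

theorem graded_par_one_le_map_act_T (k : ℤ) :
    graded par 1 ≤ (graded par 1).map (act (e (.T k))) := by
  have hshift (n : ℤ) : n - 2 * k - 1 + 2 * k + 1 = n := by ring
  rw [graded_eq_span par, Submodule.span_le, ← graded_eq_span]
  rintro _ ⟨a | a | a, b | b | b, hab, rfl⟩ <;> try (simp [par] at hab; done)
  case L.G =>
    refine ⟨tens (e (.L a)) (e (.G (b - 2 * k - 1)))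
      - ((k : ℂ) + 1 / 2) • tens (e (.T (k + a))) (e (.G (b - 2 * k - 1 - 2 * k - 1))),
      sub_mem (tens_e_e_mem_graded hab) (Submodule.smul_mem _ _ (tens_e_e_mem_graded hab)), ?_⟩
    simp [act_e_tens_e_e, bk_T_L, bk_T_T, bk_T_G, par, sgn_zero, hshift]
  case T.G =>
    refine ⟨tens (e (.T a)) (e (.G (b - 2 * k - 1))), tens_e_e_mem_graded hab, ?_⟩
    simp [act_e_tens_e_e, bk_T_T, bk_T_G, par, sgn_zero, hshift]
  case G.L =>
    refine ⟨tens (e (.G (a - 2 * k - 1))) (e (.L b))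
      - ((k : ℂ) + 1 / 2) • tens (e (.G (a - 2 * k - 1 - 2 * k - 1))) (e (.T (k + b))),
      sub_mem (tens_e_e_mem_graded hab) (Submodule.smul_mem _ _ (tens_e_e_mem_graded hab)), ?_⟩
    simp [act_e_tens_e_e, bk_T_L, bk_T_T, bk_T_G, par, sgn_zero, hshift]
  case G.T =>
    refine ⟨tens (e (.G (a - 2 * k - 1))) (e (.T b)), tens_e_e_mem_graded hab, ?_⟩
    simp [act_e_tens_e_e, bk_T_T, bk_T_G, par, sgn_zero, hshift]

theorem eq_zero_of_act_T_eq_zero {k : ℤ} {v : V} (hv : v ∈ graded par 1)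
    (h : act (e (.T k)) v = 0) : v = 0 := by
  have coeff (p q : Idx) : act (e (.T k)) v (p, q) = 0 := by rw [h, Finsupp.zero_apply]
  simp only [act_T_apply] at coeff
  have hshift (n : ℤ) : n + 2 * k + 1 - 2 * k - 1 = n := by ring
  have hLG (m n : ℤ) : v (.L m, .G n) = 0 := by
    simpa [hshift, ad_T_apply_L, ad_T_apply_G] using coeff (.L m) (.G (n + 2 * k + 1))
  have hGL (n m : ℤ) : v (.G n, .L m) = 0 := by
    simpa [hshift, ad_T_apply_L, ad_T_apply_G] using coeff (.G (n + 2 * k + 1)) (.L m)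
  refine eq_zero_of_mem_graded_par_one hv hLG (fun m n ↦ ?_) hGL (fun n m ↦ ?_)
  · simpa [hshift, ad_T_apply_T, ad_T_apply_G, hLG] using coeff (.T m) (.G (n + 2 * k + 1))
  · simpa [hshift, ad_T_apply_T, ad_T_apply_G, hGL] using coeff (.G (n + 2 * k + 1)) (.T m)

theorem eq_zero_of_act_T_neg_one_act_T_zero_eq_self {v : V} (hv : v ∈ graded par 0)
    (h : act (e (.T (-1))) (act (e (.T 0)) v) = v) : v = 0 := by
  have coeff (p q : Idx) : act (e (.T (-1))) (act (e (.T 0)) v) (p, q) = v (p, q) := by rw [h]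
  have hLL (m n : ℤ) : v (.L m, .L n) = 0 := by
    simp [← coeff (.L m) (.L n), act_T_apply, ad_T_apply_L]
  refine eq_zero_of_mem_graded_par_zero hv hLL (fun a b ↦ ?_) (fun a b ↦ ?_) (fun a b ↦ ?_)
    (fun a b ↦ ?_)
  · simp [← coeff (.L a) (.T b), act_T_apply, ad_T_apply_L, ad_T_apply_T]
  · simp [← coeff (.T a) (.L b), act_T_apply, ad_T_apply_L, ad_T_apply_T]
  · simp [← coeff (.T a) (.T b), act_T_apply, ad_T_apply_L, ad_T_apply_T, hLL]
  · have hf : (fun n : ℤ ↦ (Idx.G (a + n), Idx.G (b - n))).Injective := fun m n hmn ↦ by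
      simpa using congrArg Prod.fst hmn
    suffices v.comapDomain _ hf.injOn = 0 by simpa using DFunLike.congr_fun this 0
    refine eq_zero_of_recurrence (-1) (-1) fun n ↦ ?_
    have hGG := coeff (.G (a + n)) (.G (b - n))
    simp only [act_T_apply, ad_T_apply_G, leftSlice_apply, rightSlice_apply] at hGG
    simp only [Finsupp.comapDomain_apply]
    ring_nf at hGG ⊢
    linear_combination hGG

theorem apply_bk_T_of_mem_der_one {d : Lsa →ₗ[ℂ] V} (hd : d ∈ der 1) (k : ℤ) (j : Idx)
    (hk : d (e (.T k)) = 0) :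
    d (bk (.T k) j) = act (e (.T k)) (d (e j)) := by
  rw [(isDerOfParity_iff.1 hd).2, hk, map_zero, smul_zero, sub_zero, par, mul_zero, sgn_zero,
    one_smul]

theorem eq_zero_of_mem_der_one_of_apply_T_zero {d : Lsa →ₗ[ℂ] V} (hd : d ∈ der 1)
    (hT : d (e (.T 0)) = 0) : d = 0 := by
  have hpar := (isDerOfParity_iff.1 hd).1
  have hT' : d (e (.T (-1))) = 0 := by
    refine eq_zero_of_act_T_eq_zero (hpar (.T (-1))) (k := 0) ?_
    rw [← apply_bk_T_of_mem_der_one hd 0 _ hT, bk_T_T, map_zero]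
  have hG : d (e (.G 0)) = 0 := by
    refine eq_zero_of_act_T_neg_one_act_T_zero_eq_self (hpar (.G 0)) ?_
    rw [← apply_bk_T_of_mem_der_one hd 0 _ hT, bk_T_G,
      ← apply_bk_T_of_mem_der_one hd (-1) _ hT', bk_T_G]
    rfl
  exact eq_zero_of_apply_generators_eq_zero hd hG hT hT'

theorem der_one_le_inn_one : der 1 ≤ inn 1 := by
  intro d hd
  obtain ⟨a, ha, haT⟩ := graded_par_one_le_map_act_T 0 ((isDerOfParity_iff.1 hd).1 (.T 0))
  have hinn := innMap_mem_inn ha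
  suffices d - innMap 1 a = 0 from sub_eq_zero (a := d).1 this ▸ hinn
  refine eq_zero_of_mem_der_one_of_apply_T_zero (sub_mem_der hd (inn_le_der 1 hinn)) ?_
  rw [LinearMap.sub_apply, innMap_e, ← haT, par, mul_zero, sgn_zero, one_smul, sub_self]

/-! ### Even derivations: the value at `L 0` -/

theorem act_G_apply (n : ℤ) (p q : Idx) (v : V) :
    act (e (.G n)) v (p, q)
      = ad (e (.G n)) (leftSlice q v) p + sgn (par p) * ad (e (.G n)) (rightSlice p v) q := by
  simp [act_e_apply, par]

theorem act_L_zero_apply (p q : Idx) (v : V) :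
    act (e (.L 0)) v (p, q) = -((wt p + wt q) / 2) * v (p, q) := by
  rw [act_e_apply, ad_L_zero_apply, ad_L_zero_apply, par, zero_mul, sgn_zero, leftSlice_apply,
    rightSlice_apply]
  ring

theorem act_L_zero_eq_zero {v : V} (hv : v ∈ graded wt 0) : act (e (.L 0)) v = 0 := by
  ext ⟨p, q⟩
  rw [act_L_zero_apply, Finsupp.zero_apply, mul_eq_zero, or_iff_not_imp_right]
  intro hne
  have h : wt p + wt q = 0 := of_not_not fun h ↦ hne (apply_eq_zero_of_mem_graded hv h)
  rw [← Int.cast_add, h, Int.cast_zero, zero_div, neg_zero]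

theorem graded_le_map_act_L_zero_sup (ε : ZMod 2) :
    graded par ε ≤ (graded par ε).map (act (e (.L 0))) ⊔ graded wt 0 := by
  rw [graded_eq_span par, Submodule.span_le, ← graded_eq_span]
  rintro _ ⟨a, b, hab, rfl⟩
  by_cases h : wt a + wt b = 0
  · exact Submodule.mem_sup_right (tens_e_e_mem_graded h)
  · have hc : -(((wt a : ℂ) + wt b) / 2) ≠ 0 := by
      rw [← Int.cast_add]
      exact neg_ne_zero.2 (div_ne_zero (Int.cast_ne_zero.2 h) two_ne_zero)
    refine Submodule.mem_sup_left ⟨(-(((wt a : ℂ) + wt b) / 2))⁻¹ • tens (e a) (e b),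
      Submodule.smul_mem _ _ (tens_e_e_mem_graded hab), ?_⟩
    rw [map_smul, inv_smul_eq_iff₀ hc]
    ext ⟨p, q⟩
    rw [act_L_zero_apply, tens_e_e, Finsupp.smul_apply, smul_eq_mul]
    by_cases hpq : (a, b) = (p, q)
    · obtain ⟨rfl, rfl⟩ := Prod.mk.inj hpq
      rfl
    · rw [Finsupp.single_eq_of_ne' hpq, mul_zero, mul_zero]

theorem eq_zero_of_forall_act_e_eq_zero {v : V} (hv : v ∈ graded par 0)
    (h : ∀ i, act (e i) v = 0) : v = 0 := by
  have coeff (i p q : Idx) : act (e i) v (p, q) = 0 := by rw [h, Finsupp.zero_apply]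
  have hLL (m n : ℤ) : v (.L m, .L n) = 0 := by
    simpa [act_T_apply, ad_T_apply_L, ad_T_apply_T] using coeff (.T 0) (.T m) (.L n)
  have hodd (p q : Idx) (hpq : Odd (wt p + wt q)) : v (p, q) = 0 := by
    have hc := coeff (.L 0) p q
    rw [act_L_zero_apply, ← Int.cast_add] at hc
    have hne : wt p + wt q ≠ 0 := fun h0 ↦ by simp [h0] at hpq
    refine (mul_eq_zero.1 hc).resolve_left ?_
    exact neg_ne_zero.2 (div_ne_zero (Int.cast_ne_zero.2 hne) two_ne_zero)
  have hLT (m n : ℤ) : v (.L m, .T n) = 0 := hodd _ _ ⟨m + n, by simp only [wt]; ring⟩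
  have hTL (m n : ℤ) : v (.T m, .L n) = 0 := hodd _ _ ⟨m + n, by simp only [wt]; ring⟩
  have hGG (a b : ℤ) : v (.G a, .G b) = 0 := by
    have hc := coeff (.G (-a)) (.L 0) (.G b)
    rw [act_G_apply, ad_G_apply_L] at hc
    have hsign : (-1 : ℂ) ^ a ≠ 0 := zpow_ne_zero a (neg_ne_zero.2 one_ne_zero)
    obtain ⟨k, hk | hk⟩ := Int.even_or_odd' (b + a)
    · rw [show b = -a + 2 * k by omega] at hc ⊢
      simpa [ad_G_apply_G_add_two_mul, hLL, hsign] using hc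
    · rw [show b = -a + 2 * k + 1 by omega] at hc ⊢
      simpa [ad_G_apply_G_add_two_mul_add_one, hLT, hsign] using hc
  refine eq_zero_of_mem_graded_par_zero hv hLL hLT hTL (fun m n ↦ ?_) hGG
  have hc := coeff (.G 0) (.G (0 + 2 * m + 1)) (.T n)
  rw [act_G_apply, ad_G_apply_G_add_two_mul_add_one, ad_G_apply_T] at hc
  simpa [hGG] using hc

section EvenDerivation

variable {d : Lsa →ₗ[ℂ] V}

theorem apply_bk_of_mem_der_zero (hd : d ∈ der 0) (i j : Idx) :
    d (bk i j) = act (e i) (d (e j)) - sgn (par i * par j) • act (e j) (d (e i)) := by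
  rw [(isDerOfParity_iff.1 hd).2, zero_mul, sgn_zero, one_smul, zero_add, mul_comm]

theorem act_e_apply_L_zero (hd : d ∈ der 0) (i p q : Idx) :
    act (e i) (d (e (.L 0))) (p, q) = (wt i - (wt p + wt q)) / 2 * d (e i) (p, q) := by
  have hbk : bk (.L 0) i = -(wt i / 2 : ℂ) • e i := by
    ext p
    rw [← ad_e_e, ad_L_zero_apply]
    by_cases hp : i = p
    · subst hp
      rfl
    · simp [e, hp]
  have h := congrArg (· (p, q)) (apply_bk_of_mem_der_zero hd (.L 0) i)
  simp only [hbk, map_smul, par, zero_mul, sgn_zero, one_smul, Finsupp.smul_apply,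
    Finsupp.sub_apply, smul_eq_mul, act_L_zero_apply] at h
  linear_combination h

theorem apply_L_zero_eq_zero (hd : d ∈ der 0) (hL : d (e (.L 0)) ∈ graded wt 0) :
    d (e (.L 0)) = 0 := by
  refine eq_zero_of_forall_act_e_eq_zero ((isDerOfParity_iff.1 hd).1 (.L 0)) fun i ↦ ?_
  ext ⟨p, q⟩
  by_cases hpq : wt p + wt q = wt i + 0
  · rw [act_e_apply_L_zero hd, ← Int.cast_add, hpq]
    simp
  · exact apply_eq_zero_of_mem_graded (act_e_mem_graded isGrading_wt i hL) hpq

theorem apply_e_mem_graded_wt (hd : d ∈ der 0) (hL : d (e (.L 0)) = 0) (i : Idx) :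
    d (e i) ∈ graded wt (wt i) := by
  refine (Finsupp.mem_supported' ℂ _).2 fun ⟨p, q⟩ hpq ↦ ?_
  have h := act_e_apply_L_zero hd i p q
  rw [hL, map_zero, Finsupp.zero_apply, ← Int.cast_add, ← Int.cast_sub] at h
  refine (mul_eq_zero.1 h.symm).resolve_left ?_
  exact div_ne_zero (Int.cast_ne_zero.2 (sub_ne_zero.2 (Ne.symm hpq))) two_ne_zero

theorem exists_mem_inn_zero_apply_L_zero_eq (hd : d ∈ der 0) :
    ∃ f ∈ inn 0, f (e (.L 0)) = d (e (.L 0)) := by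
  obtain ⟨_, ⟨a, ha, rfl⟩, v, hv, hav⟩ :=
    Submodule.mem_sup.1 (graded_le_map_act_L_zero_sup 0 ((isDerOfParity_iff.1 hd).1 (.L 0)))
  have hinn := innMap_mem_inn ha
  refine ⟨innMap 0 a, hinn, (sub_eq_zero.1 ?_).symm⟩
  rw [← LinearMap.sub_apply]
  refine apply_L_zero_eq_zero (sub_mem_der hd (inn_le_der 0 hinn)) ?_
  rw [LinearMap.sub_apply, innMap_e, ← hav, zero_mul, sgn_zero, one_smul, add_sub_cancel_left]
  exact hv

end EvenDerivation

/-! ### Even derivations: the value at `G 0` -/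

/-- The tensor product `φ ⊗ ψ` of two linear maps, without signs. -/
def mapTens (φ ψ : Lsa →ₗ[ℂ] Lsa) : V →ₗ[ℂ] V :=
  Finsupp.linearCombination ℂ fun p : Idx × Idx ↦ tens (φ (e p.1)) (ψ (e p.2))

theorem mapTens_tens (φ ψ : Lsa →ₗ[ℂ] Lsa) (x y : Lsa) :
    mapTens φ ψ (tens x y) = tens (φ x) (ψ y) := by
  refine LinearMap.congr_fun (LinearMap.congr_fun (f := tens.compr₂ (mapTens φ ψ))
    (g := tens.compl₁₂ φ ψ) ?_ x) y
  refine hom_ext_e fun a ↦ hom_ext_e fun b ↦ ?_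
  simp [mapTens, tens_e_e]

theorem mapTens_apply {φ ψ : Lsa →ₗ[ℂ] Lsa} {p q a b : Idx} (hφ : ∀ x, φ x p = x a)
    (hψ : ∀ y, ψ y q = y b) (v : V) : mapTens φ ψ v (p, q) = v (a, b) := by
  refine LinearMap.congr_fun (f := Finsupp.lapply (p, q) ∘ₗ mapTens φ ψ)
    (g := Finsupp.lapply (a, b)) (hom_ext_tens fun c d ↦ ?_) v
  simp [mapTens_tens, tens_apply, hφ, hψ]

theorem mapTens_apply_eq_zero {φ ψ : Lsa →ₗ[ℂ] Lsa} {p q : Idx}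
    (h : (∀ x, φ x p = 0) ∨ ∀ y, ψ y q = 0) (v : V) : mapTens φ ψ v (p, q) = 0 := by
  refine LinearMap.congr_fun (f := Finsupp.lapply (p, q) ∘ₗ mapTens φ ψ) (g := 0)
    (hom_ext_tens fun c d ↦ ?_) v
  rcases h with h | h <;> simp [mapTens_tens, tens_apply, h]

/-- The linear endomorphisms of `Lsa` raising the degree for the grading `w` by `m`. -/
def raising {A : Type*} [Add A] (w : Idx → A) (m : A) : Submodule ℂ (Lsa →ₗ[ℂ] Lsa) where
  carrier := {φ | ∀ a p, φ (e a) p ≠ 0 → w p = m + w a}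
  zero_mem' _ _ h := absurd rfl h
  add_mem' {φ ψ} hφ hψ a p h := by
    by_cases hp : φ (e a) p = 0
    · exact hψ a p fun hp' ↦ h (by simp [hp, hp'])
    · exact hφ a p hp
  smul_mem' c φ hφ a p h := hφ a p (right_ne_zero_of_mul (a := c) h)

theorem id_mem_raising {A : Type*} [AddMonoid A] (w : Idx → A) : LinearMap.id ∈ raising w 0 := by
  intro a p h
  rw [zero_add, (Finsupp.single_apply_ne_zero.1 h).1]

theorem mapTens_mem_graded {A : Type*} [AddCommMonoid A] {w : Idx → A} {l m n : A}
    {φ ψ : Lsa →ₗ[ℂ] Lsa} (hφ : φ ∈ raising w l) (hψ : ψ ∈ raising w m) {v : V}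
    (hv : v ∈ graded w n) : mapTens φ ψ v ∈ graded w (l + m + n) := by
  suffices graded w n ≤ (graded w (l + m + n)).comap (mapTens φ ψ) from this hv
  rw [graded_eq_span, Submodule.span_le]
  rintro _ ⟨a, b, rfl, rfl⟩
  rw [SetLike.mem_coe, Submodule.mem_comap, mapTens_tens, add_add_add_comm]
  exact tens_mem_graded (hφ a) (hψ b)

section Transfer

variable {ι : Type*} {x : ι → Idx} (hx : x.Injective) (y : ι → Idx)

/-- The linear map sending `e (x n)` to `e (y n)` for all `n`, and the other basis vectors to
zero. -/
def transfer : Lsa →ₗ[ℂ] Lsa :=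
  Finsupp.lmapDomain ℂ ℂ y ∘ₗ Finsupp.lcomapDomain x hx

theorem transfer_e (n : ι) : transfer hx y (e (x n)) = e (y n) := by
  simp [transfer, e, Finsupp.lcomapDomain]

theorem transfer_e_of_notMem_range {a : Idx} (ha : a ∉ Set.range x) : transfer hx y (e a) = 0 := by
  have : Finsupp.lcomapDomain (R := ℂ) x hx (e a) = 0 := by
    ext n
    exact Finsupp.single_eq_of_ne fun h ↦ ha ⟨n, h⟩
  rw [transfer, LinearMap.comp_apply, this, map_zero]

theorem transfer_apply {y : ι → Idx} (hy : y.Injective) (n : ι) (z : Lsa) :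
    transfer hx y z (y n) = z (x n) :=
  Finsupp.mapDomain_apply hy _ n

theorem transfer_apply_of_notMem_range {p : Idx} (hp : p ∉ Set.range y) (z : Lsa) :
    transfer hx y z p = 0 :=
  Finsupp.mapDomain_of_notMem_range _ p hp

theorem transfer_mem_raising {A : Type*} [Add A] {w : Idx → A} {m : A}
    (h : ∀ n, w (y n) = m + w (x n)) : transfer hx y ∈ raising w m := by
  intro a p hp
  by_cases ha : a ∈ Set.range x
  · obtain ⟨n, rfl⟩ := ha
    rw [transfer_e] at hp
    rw [(Finsupp.single_apply_ne_zero.1 hp).1, h]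
  · rw [transfer_e_of_notMem_range hx y ha] at hp
    exact absurd rfl hp

end Transfer

theorem injective_L : Idx.L.Injective := fun _ _ ↦ Idx.L.inj

theorem injective_T : Idx.T.Injective := fun _ _ ↦ Idx.T.inj

theorem injective_G_even : (fun m : ℤ ↦ Idx.G (2 * m)).Injective := fun m n h ↦ by
  simpa using h

theorem injective_G_odd : (fun m : ℤ ↦ Idx.G (2 * m + 1)).Injective := fun m n h ↦ by
  simpa using h

theorem G_even_notMem_range_G_odd (m : ℤ) :
    Idx.G (2 * m) ∉ Set.range fun k : ℤ ↦ Idx.G (2 * k + 1) := by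
  rintro ⟨k, hk⟩
  have := Idx.G.inj hk
  omega

/-- A contracting homotopy for `ad (e (.G 0))`:
`L m ↦ G (2 * m) / 2`, `G (2 * m + 1) ↦ -T m`, and the other basis vectors map to zero. -/
def contraction : Lsa →ₗ[ℂ] Lsa :=
  (1 / 2 : ℂ) • transfer injective_L (fun m ↦ .G (2 * m)) - transfer injective_G_odd .T

theorem contraction_mem_raising_par : contraction ∈ raising par 1 :=
  Submodule.sub_mem (M := Lsa →ₗ[ℂ] Lsa) _
    (Submodule.smul_mem (M := Lsa →ₗ[ℂ] Lsa) _ _ (transfer_mem_raising _ _ fun _ ↦ rfl))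
    (transfer_mem_raising _ _ fun _ ↦ rfl)

theorem contraction_L (m : ℤ) : contraction (e (.L m)) = (1 / 2 : ℂ) • e (.G (2 * m)) := by
  simp [contraction, transfer_e, transfer_e_of_notMem_range]

theorem contraction_T (k : ℤ) : contraction (e (.T k)) = 0 := by
  simp [contraction, transfer_e_of_notMem_range]

theorem contraction_G_even (m : ℤ) : contraction (e (.G (2 * m))) = 0 := by
  have hL := transfer_e_of_notMem_range injective_L (fun m ↦ .G (2 * m)) (a := .G (2 * m)) (by simp)
  have hG := transfer_e_of_notMem_range injective_G_odd .T (G_even_notMem_range_G_odd m)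
  rw [contraction, LinearMap.sub_apply, LinearMap.smul_apply, hL, hG, smul_zero, sub_zero]

theorem contraction_G_odd (m : ℤ) : contraction (e (.G (2 * m + 1))) = -e (.T m) := by
  simp [contraction, transfer_e_of_notMem_range, transfer_e injective_G_odd]

theorem ad_G_zero_contraction_add (x : Lsa) :
    ad (e (.G 0)) (contraction x) + contraction (ad (e (.G 0)) x) = x := by
  refine LinearMap.congr_fun (f := ad (e (.G 0)) ∘ₗ contraction + contraction ∘ₗ ad (e (.G 0)))
    (g := LinearMap.id) (hom_ext_e fun a ↦ ?_) x
  have hGG (m : ℤ) : bk (.G 0) (.G (2 * m)) = (2 : ℂ) • e (.L m) := by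
    simpa using bk_G_even_G_even 0 m
  have hGG' (m : ℤ) : bk (.G 0) (.G (2 * m + 1)) = ((m : ℂ) + 1 / 2) • e (.T m) := by
    simpa using bk_G_even_G_odd 0 m
  simp only [LinearMap.add_apply, LinearMap.comp_apply, LinearMap.id_apply, ad_e_e]
  induction a using Idx.cases_parity with
  | L m => simp [contraction_L, contraction_G_even, hGG, bk_G_L]
  | T k => simp [contraction_T, contraction_G_odd, bk_G_T]
  | G_even m => simp [contraction_L, contraction_G_even, hGG]
  | G_odd m => simp [contraction_T, contraction_G_odd, hGG', bk_G_T]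

theorem mapTens_contraction_mem_graded_par {ε : ZMod 2} {v : V} (hv : v ∈ graded par ε) :
    mapTens contraction LinearMap.id v ∈ graded par (1 + ε) := by
  simpa using mapTens_mem_graded contraction_mem_raising_par (id_mem_raising par) hv

theorem act_G_zero_mapTens_contraction_add (v : V) :
    act (e (.G 0)) (mapTens contraction LinearMap.id v)
      + mapTens contraction LinearMap.id (act (e (.G 0)) v) = v := by
  refine LinearMap.congr_fun (f := act (e (.G 0)) ∘ₗ mapTens contraction LinearMap.id
    + mapTens contraction LinearMap.id ∘ₗ act (e (.G 0))) (g := LinearMap.id)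
    (hom_ext_tens fun a b ↦ ?_) v
  have hhomog : contraction (e a) ∈ homog (1 + par a) :=
    fun p hp ↦ contraction_mem_raising_par a p (Finsupp.mem_support_iff.1 hp)
  conv_rhs => rw [LinearMap.id_apply, ← ad_G_zero_contraction_add (e a)]
  simp only [LinearMap.add_apply, LinearMap.comp_apply, mapTens_tens, LinearMap.id_apply, map_add,
    act_tens (e_mem_homog _) (e_mem_homog _), act_tens (e_mem_homog _) hhomog, map_smul, par,
    mul_add, sgn_add, mul_one, sgn_one]
  module

theorem innMap_zero_e (a : V) (i : Idx) : innMap 0 a (e i) = act (e i) a := by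
  rw [innMap_e, zero_mul, sgn_zero, one_smul]

theorem bk_G_zero_G_zero : bk (.G 0) (.G 0) = (2 : ℂ) • e (.L 0) :=
  bk_G_even_G_even 0 0

theorem act_G_zero_act_G_zero (v : V) :
    act (e (.G 0)) (act (e (.G 0)) v) = act (e (.L 0)) v := by
  have h := act_bk (.G 0) (.G 0) v
  rw [bk_G_zero_G_zero, map_smul, par, mul_one, sgn_one, LinearMap.smul_apply] at h
  linear_combination (norm := module) (-1 / 2 : ℂ) • h

theorem apply_L_zero_of_mem_der_zero {d : Lsa →ₗ[ℂ] V} (hd : d ∈ der 0) :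
    d (e (.L 0)) = act (e (.G 0)) (d (e (.G 0))) := by
  have h := apply_bk_of_mem_der_zero hd (.G 0) (.G 0)
  rw [bk_G_zero_G_zero, map_smul, par, mul_one, sgn_one] at h
  linear_combination (norm := module) (1 / 2 : ℂ) • h

theorem exists_mem_inn_zero_apply_G_zero_eq {d : Lsa →ₗ[ℂ] V} (hd : d ∈ der 0)
    (hL : d (e (.L 0)) = 0) : ∃ f ∈ inn 0, f (e (.G 0)) = d (e (.G 0)) := by
  refine ⟨_, innMap_mem_inn
    (mapTens_contraction_mem_graded_par ((isDerOfParity_iff.1 hd).1 (.G 0))), ?_⟩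
  simpa [innMap_zero_e, ← apply_L_zero_of_mem_der_zero hd, hL] using
    act_G_zero_mapTens_contraction_add (d (e (.G 0)))

/-! ### Even derivations: the values at `T 0` and `T (-1)` -/

/-- The relations satisfied by `τ = d (e (.T 0))` and `σ = d (e (.T (-1)))` for an even derivation
`d` killing `e (.G 0)`. The last one expresses `d (e (.G 0)) = 0` through
`[T (-1), [T 0, G 0]] = [T (-1), G 1] = G 0`. -/
structure IsTPair (τ σ : V) : Prop where
  left_mem_graded_par : τ ∈ graded par 0
  left_mem_graded_wt : τ ∈ graded wt 1
  right_mem_graded_par : σ ∈ graded par 0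
  right_mem_graded_wt : σ ∈ graded wt (-1)
  act_T : act (e (.T 0)) σ = act (e (.T (-1))) τ
  act_T_act_G_add : act (e (.T (-1))) (act (e (.G 0)) τ) + act (e (.G 1)) σ = 0

namespace IsTPair

variable {τ σ : V}

theorem right_apply_G_G (h : IsTPair τ σ) (a b : ℤ) :
    σ (.G a, .G b) = τ (.G (a + 1), .G (b + 1)) := by
  have hσ : (fun n : ℤ ↦ (Idx.G (a + n), Idx.G (b - n))).Injective := fun m n hmn ↦ by
    simpa using congrArg Prod.fst hmn
  have hτ : (fun n : ℤ ↦ (Idx.G (a + n + 1), Idx.G (b - n + 1))).Injective := fun m n hmn ↦ by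
    simpa using congrArg Prod.fst hmn
  suffices σ.comapDomain _ hσ.injOn - τ.comapDomain _ hτ.injOn = 0 by
    simpa [sub_eq_zero] using DFunLike.congr_fun this 0
  refine eq_zero_of_recurrence (-1) 0 fun n ↦ ?_
  have hGG := DFunLike.congr_fun h.act_T (.G (a + n + 1), .G (b - n))
  simp only [act_T_apply, ad_T_apply_G, leftSlice_apply, rightSlice_apply] at hGG
  simp only [Finsupp.sub_apply, Finsupp.comapDomain_apply]
  ring_nf at hGG ⊢
  linear_combination hGG

theorem right_apply_L_T (h : IsTPair τ σ) (m n : ℤ) :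
    σ (.L m, .T n) = -τ (.L m, .T (n + 1)) := by
  have hLG := DFunLike.congr_fun h.act_T_act_G_add (.L m, .G (1 + 2 * n + 1))
  rw [Finsupp.add_apply, Finsupp.zero_apply, act_T_apply, ad_T_apply_L, ad_T_apply_G,
    rightSlice_apply, show 1 + 2 * n + 1 - 2 * (-1) - 1 = 0 + 2 * (n + 1) + 1 by ring,
    act_G_apply, act_G_apply, ad_G_apply_L, ad_G_apply_L, ad_G_apply_G_add_two_mul_add_one,
    ad_G_apply_G_add_two_mul_add_one, leftSlice_apply, leftSlice_apply, right_apply_G_G h] at hLG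
  simp only [par, sgn_zero, zpow_zero, zpow_one, sub_add_cancel, rightSlice_apply] at hLG
  ring_nf at hLG ⊢
  linear_combination -hLG

theorem right_apply_T_L (h : IsTPair τ σ) (m n : ℤ) :
    σ (.T m, .L n) = -τ (.T (m + 1), .L n) := by
  have hGL := DFunLike.congr_fun h.act_T_act_G_add (.G (1 + 2 * m + 1), .L n)
  rw [Finsupp.add_apply, Finsupp.zero_apply, act_T_apply, ad_T_apply_L, ad_T_apply_G,
    leftSlice_apply, show 1 + 2 * m + 1 - 2 * (-1) - 1 = 0 + 2 * (m + 1) + 1 by ring,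
    act_G_apply, act_G_apply, ad_G_apply_L, ad_G_apply_L, ad_G_apply_G_add_two_mul_add_one,
    ad_G_apply_G_add_two_mul_add_one, rightSlice_apply, rightSlice_apply,
    right_apply_G_G h] at hGL
  simp only [par, sgn_one, zpow_zero, zpow_one, sub_add_cancel, leftSlice_apply] at hGL
  ring_nf at hGL ⊢
  linear_combination -hGL

theorem left_apply_L_T (h : IsTPair τ σ) (m n : ℤ) : τ (.L m, .T n) = τ (.T m, .L n) := by
  have hTL : (fun k : ℤ ↦ (Idx.T (m + k), Idx.L (n - k))).Injective := fun k l hkl ↦ by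
    simpa using congrArg Prod.fst hkl
  have hLT : (fun k : ℤ ↦ (Idx.L (m + k), Idx.T (n - k))).Injective := fun k l hkl ↦ by
    simpa using congrArg Prod.fst hkl
  suffices τ.comapDomain _ hLT.injOn - τ.comapDomain _ hTL.injOn = 0 by
    simpa [sub_eq_zero] using DFunLike.congr_fun this 0
  refine eq_zero_of_recurrence 1 0 fun k ↦ ?_
  have hTT := DFunLike.congr_fun h.act_T (.T (m + k), .T (n - k - 1))
  simp only [act_T_apply, ad_T_apply_T, leftSlice_apply, rightSlice_apply, right_apply_L_T h,
    right_apply_T_L h] at hTT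
  simp only [Finsupp.sub_apply, Finsupp.comapDomain_apply]
  push_cast at hTT
  ring_nf at hTT ⊢
  linear_combination 2 * hTT

theorem left_apply_G_odd_G_even (h : IsTPair τ σ) (hTL : ∀ m n, τ (.T m, .L n) = 0) (k l : ℤ) :
    τ (.G (2 * k + 1), .G (2 * l + 2)) = τ (.G (2 * k + 2), .G (2 * l + 1)) := by
  have hGT := DFunLike.congr_fun h.act_T_act_G_add (.G (1 + 2 * k), .T l)
  rw [Finsupp.add_apply, Finsupp.zero_apply, act_T_apply, ad_T_apply_T, ad_T_apply_G,
    leftSlice_apply, rightSlice_apply, show 1 + 2 * k - 2 * (-1) - 1 = 0 + 2 * (k + 1) by ring,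
    act_G_apply, act_G_apply, ad_G_apply_T, ad_G_apply_G_add_two_mul, act_G_apply,
    ad_G_apply_G_add_two_mul, ad_G_apply_T, ad_G_apply_L,
    show 1 + 2 * k = 0 + 2 * k + 1 by ring, ad_G_apply_G_add_two_mul_add_one] at hGT
  simp only [par, sgn_one, leftSlice_apply, rightSlice_apply, right_apply_G_G h,
    right_apply_L_T h, left_apply_L_T h, hTL] at hGT
  push_cast at hGT
  ring_nf at hGT ⊢
  linear_combination hGT

theorem left_eq_zero (h : IsTPair τ σ) (hTL : ∀ m n, τ (.T m, .L n) = 0)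
    (hGG : ∀ k l, τ (.G (2 * k + 1), .G (2 * l + 2)) = 0) : τ = 0 := by
  have hwt {p q : Idx} (hpq : wt p + wt q ≠ 1) : τ (p, q) = 0 :=
    apply_eq_zero_of_mem_graded h.left_mem_graded_wt hpq
  refine eq_zero_of_mem_graded_par_zero h.left_mem_graded_par
    (fun m n ↦ hwt (by simp only [wt]; omega)) (fun m n ↦ by rw [left_apply_L_T h, hTL]) hTL
    (fun m n ↦ hwt (by simp only [wt]; omega)) (fun a b ↦ ?_)
  by_cases hab : a + b = 1
  · obtain ⟨k, hk | hk⟩ := Int.even_or_odd' a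
    · obtain rfl : a = 2 * (k - 1) + 2 := by omega
      obtain rfl : b = 2 * (-k) + 1 := by omega
      rw [← left_apply_G_odd_G_even h hTL, hGG]
    · obtain rfl : b = 2 * (-k - 1) + 2 := by omega
      rw [hk, hGG]
  · exact hwt hab

theorem right_eq_zero (h : IsTPair 0 σ) : σ = 0 := by
  have hwt {p q : Idx} (hpq : wt p + wt q ≠ -1) : σ (p, q) = 0 :=
    apply_eq_zero_of_mem_graded h.right_mem_graded_wt hpq
  refine eq_zero_of_mem_graded_par_zero h.right_mem_graded_par
    (fun m n ↦ hwt (by simp only [wt]; omega)) (fun m n ↦ ?_) (fun m n ↦ ?_)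
    (fun m n ↦ hwt (by simp only [wt]; omega)) (fun a b ↦ ?_)
  · rw [right_apply_L_T h, Finsupp.zero_apply, neg_zero]
  · rw [right_apply_T_L h, Finsupp.zero_apply, neg_zero]
  · rw [right_apply_G_G h, Finsupp.zero_apply]

end IsTPair

theorem act_T_zero_act_G_zero_apply_T_L (b : V) (m n : ℤ) :
    act (e (.T 0)) (act (e (.G 0)) b) (.T m, .L n)
      = b (.G (2 * m), .L n) + b (.L m, .G (2 * n)) := by
  simp only [act_T_apply, ad_T_apply_L, ad_T_apply_T, leftSlice_apply, rightSlice_apply,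
    act_G_apply, ad_G_apply_L, par, sgn_zero, zpow_zero, sub_zero]
  ring

theorem act_T_zero_act_G_zero_apply_G_odd_G_even (b : V) (k l : ℤ) :
    act (e (.T 0)) (act (e (.G 0)) b) (.G (2 * k + 1), .G (2 * l + 2))
      = b (.G (2 * k + 1), .T l) - b (.T k, .G (2 * l + 1))
        + ((l + 1) * b (.G (2 * k), .L (l + 1)) - k * b (.L k, .G (2 * l + 2))) / 2 := by
  rw [act_T_apply, ad_T_apply_G, ad_T_apply_G, leftSlice_apply, rightSlice_apply,
    show 2 * k + 1 - 2 * 0 - 1 = 0 + 2 * k by ring, show 2 * k + 1 = 0 + 2 * k + 1 by ring,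
    show 2 * l + 2 - 2 * 0 - 1 = 0 + 2 * l + 1 by ring, show 2 * l + 2 = 0 + 2 * (l + 1) by ring,
    act_G_apply, act_G_apply, ad_G_apply_G_add_two_mul, ad_G_apply_G_add_two_mul,
    ad_G_apply_G_add_two_mul_add_one, ad_G_apply_G_add_two_mul_add_one]
  simp only [leftSlice_apply, rightSlice_apply, par, sgn_one, zero_add]
  push_cast
  ring

theorem exists_act_T_zero_act_G_zero_apply_T_L {τ : V} (hpar : τ ∈ graded par 0)
    (hwt : τ ∈ graded wt 1) :
    ∃ b ∈ graded par 1 ⊓ graded wt 0, ∀ m n,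
      act (e (.T 0)) (act (e (.G 0)) b) (.T m, .L n) = τ (.T m, .L n) := by
  let φ := transfer injective_T fun m ↦ .G (2 * m)
  have hφpar : φ ∈ raising par 1 := transfer_mem_raising _ _ fun _ ↦ rfl
  have hφwt : φ ∈ raising wt (-1) := transfer_mem_raising _ _ fun m ↦ by simp only [wt]; ring
  refine ⟨mapTens φ LinearMap.id τ,
    ⟨mapTens_mem_graded hφpar (id_mem_raising par) hpar,
      mapTens_mem_graded hφwt (id_mem_raising wt) hwt⟩, fun m n ↦ ?_⟩
  rw [act_T_zero_act_G_zero_apply_T_L,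
    mapTens_apply (transfer_apply injective_T injective_G_even m) (fun _ ↦ rfl),
    mapTens_apply_eq_zero (.inl (transfer_apply_of_notMem_range _ _ (by simp))), add_zero]

theorem exists_act_T_zero_act_G_zero_apply_G_odd_G_even {τ : V} (hpar : τ ∈ graded par 0)
    (hwt : τ ∈ graded wt 1) :
    ∃ b ∈ graded par 1 ⊓ graded wt 0,
      (∀ m n, act (e (.T 0)) (act (e (.G 0)) b) (.T m, .L n) = 0) ∧
      ∀ k l, act (e (.T 0)) (act (e (.G 0)) b) (.G (2 * k + 1), .G (2 * l + 2))
        = τ (.G (2 * k + 1), .G (2 * l + 2)) := by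
  have hinj : (fun l : ℤ ↦ Idx.G (2 * l + 2)).Injective := fun k l h ↦ by simpa using h
  let φ := transfer injective_G_odd fun k ↦ .G (2 * k + 1)
  let ψ := transfer hinj .T
  have hφpar : φ ∈ raising par 0 := transfer_mem_raising _ _ fun _ ↦ rfl
  have hφwt : φ ∈ raising wt 0 := transfer_mem_raising _ _ fun _ ↦ (zero_add _).symm
  have hψpar : ψ ∈ raising par 1 := transfer_mem_raising _ _ fun _ ↦ rfl
  have hψwt : ψ ∈ raising wt (-1) := transfer_mem_raising _ _ fun l ↦ by simp only [wt]; ring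
  have hφG (k : ℤ) (x : Lsa) : φ x (.G (2 * k + 1)) = x (.G (2 * k + 1)) :=
    transfer_apply injective_G_odd injective_G_odd k x
  have hψT (l : ℤ) (y : Lsa) : ψ y (.T l) = y (.G (2 * l + 2)) :=
    transfer_apply hinj injective_T l y
  have hφ0 {p : Idx} (hp : p ∉ Set.range fun k : ℤ ↦ Idx.G (2 * k + 1)) (q : Idx) :
      mapTens φ ψ τ (p, q) = 0 :=
    mapTens_apply_eq_zero (.inl (transfer_apply_of_notMem_range _ _ hp)) τ
  refine ⟨mapTens φ ψ τ,
    ⟨mapTens_mem_graded hφpar hψpar hpar, mapTens_mem_graded hφwt hψwt hwt⟩,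
    fun m n ↦ ?_, fun k l ↦ ?_⟩
  · rw [act_T_zero_act_G_zero_apply_T_L, hφ0 (G_even_notMem_range_G_odd _), hφ0 (by simp), add_zero]
  · rw [act_T_zero_act_G_zero_apply_G_odd_G_even, mapTens_apply (hφG k) (hψT l), hφ0 (by simp),
      hφ0 (G_even_notMem_range_G_odd _), hφ0 (by simp)]
    ring

theorem exists_act_T_zero_act_G_zero_apply {τ : V} (hpar : τ ∈ graded par 0)
    (hwt : τ ∈ graded wt 1) :
    ∃ b ∈ graded par 1 ⊓ graded wt 0,
      (∀ m n, act (e (.T 0)) (act (e (.G 0)) b) (.T m, .L n) = τ (.T m, .L n)) ∧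
      ∀ k l, act (e (.T 0)) (act (e (.G 0)) b) (.G (2 * k + 1), .G (2 * l + 2))
        = τ (.G (2 * k + 1), .G (2 * l + 2)) := by
  obtain ⟨b, hb, hTL⟩ := exists_act_T_zero_act_G_zero_apply_T_L hpar hwt
  have hpar' := act_e_mem_graded isGrading_par (.T 0) (act_e_mem_graded isGrading_par (.G 0) hb.1)
  have hwt' := act_e_mem_graded isGrading_wt (.T 0) (act_e_mem_graded isGrading_wt (.G 0) hb.2)
  obtain ⟨b', hb', hTL', hGG'⟩ := exists_act_T_zero_act_G_zero_apply_G_odd_G_even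
    (sub_mem hpar hpar') (sub_mem hwt hwt')
  refine ⟨b + b', add_mem hb hb', fun m n ↦ ?_, fun k l ↦ ?_⟩
  · rw [map_add, map_add, Finsupp.add_apply, hTL, hTL', add_zero]
  · rw [map_add, map_add, Finsupp.add_apply, hGG', Finsupp.sub_apply, add_sub_cancel]

section EvenDerivation

variable {d : Lsa →ₗ[ℂ] V}

theorem isTPair_of_mem_der_zero (hd : d ∈ der 0) (hG : d (e (.G 0)) = 0) :
    IsTPair (d (e (.T 0))) (d (e (.T (-1)))) where
  left_mem_graded_par := (isDerOfParity_iff.1 hd).1 (.T 0)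
  left_mem_graded_wt := apply_e_mem_graded_wt hd
    (by rw [apply_L_zero_of_mem_der_zero hd, hG, map_zero]) (.T 0)
  right_mem_graded_par := (isDerOfParity_iff.1 hd).1 (.T (-1))
  right_mem_graded_wt := apply_e_mem_graded_wt hd
    (by rw [apply_L_zero_of_mem_der_zero hd, hG, map_zero]) (.T (-1))
  act_T := by
    have h := apply_bk_of_mem_der_zero hd (.T 0) (.T (-1))
    rw [bk_T_T, map_zero, par, zero_mul, sgn_zero, one_smul] at h
    exact sub_eq_zero.1 h.symm
  act_T_act_G_add := by
    have hbk : bk (.T 0) (.G 0) = e (.G 1) := rfl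
    have hbk' : bk (.T (-1)) (.G 1) = e (.G 0) := rfl
    have h := apply_bk_of_mem_der_zero hd (.T 0) (.G 0)
    have h' := apply_bk_of_mem_der_zero hd (.T (-1)) (.G 1)
    simp only [hbk, hbk', hG, map_zero, par, zero_mul, sgn_zero, one_smul, zero_sub] at h h'
    rw [h, map_neg] at h'
    linear_combination (norm := module) h'

theorem mem_inn_zero_of_apply_G_zero (hd : d ∈ der 0) (hG : d (e (.G 0)) = 0) : d ∈ inn 0 := by
  have hpair := isTPair_of_mem_der_zero hd hG
  obtain ⟨b, ⟨hbpar, hbwt⟩, hTL, hGG⟩ := exists_act_T_zero_act_G_zero_apply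
    hpair.left_mem_graded_par hpair.left_mem_graded_wt
  have hf : innMap 0 (act (e (.G 0)) b) ∈ inn 0 :=
    innMap_mem_inn (act_e_mem_graded isGrading_par (.G 0) hbpar)
  set f := innMap 0 (act (e (.G 0)) b) with hf_def
  have hfG : (d - f) (e (.G 0)) = 0 := by
    rw [LinearMap.sub_apply, hG, hf_def, innMap_zero_e, act_G_zero_act_G_zero,
      act_L_zero_eq_zero hbwt, sub_zero]
  have hdf := sub_mem_der hd (inn_le_der 0 hf)
  have hpair' := isTPair_of_mem_der_zero hdf hfG
  have hT : (d - f) (e (.T 0)) = 0 := by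
    refine hpair'.left_eq_zero (fun m n ↦ ?_) (fun k l ↦ ?_)
    · rw [LinearMap.sub_apply, Finsupp.sub_apply, hf_def, innMap_zero_e, hTL, sub_self]
    · rw [LinearMap.sub_apply, Finsupp.sub_apply, hf_def, innMap_zero_e, hGG, sub_self]
  have hT' := (hT ▸ hpair').right_eq_zero
  rwa [sub_eq_zero (a := d).1 (eq_zero_of_apply_generators_eq_zero hdf hfG hT hT')]

theorem der_zero_le_inn_zero : der 0 ≤ inn 0 := by
  intro d hd
  obtain ⟨f, hf, hfL⟩ := exists_mem_inn_zero_apply_L_zero_eq hd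
  have hdf := sub_mem_der hd (inn_le_der 0 hf)
  obtain ⟨g, hg, hgG⟩ := exists_mem_inn_zero_apply_G_zero_eq hdf
    (by rw [LinearMap.sub_apply, hfL, sub_self])
  have hsub : d - f - g ∈ inn 0 := mem_inn_zero_of_apply_G_zero
    (sub_mem_der hdf (inn_le_der 0 hg)) (by rw [LinearMap.sub_apply, hgG, sub_self])
  have hsub' := (Submodule.sub_mem_iff_left (M := Lsa →ₗ[ℂ] V) _ hg).1 hsub
  exact (Submodule.sub_mem_iff_left (M := Lsa →ₗ[ℂ] V) _ hf).1 hsub'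

end EvenDerivation

/-- Every super-derivation from `𝓛` to `V = 𝓛 ⊗ 𝓛` (of homogeneous parity `ε`)
is inner: `Der(𝓛, V) = Inn(𝓛, V)`, i.e. `H¹(𝓛, V) = 0`. -/
theorem der_eq_inn (ε : ZMod 2) (d : Lsa →ₗ[ℂ] V) (hd : IsDerOfParity ε d) :
    ∃ a : V, IsParityV ε a ∧ d = innMap ε a := by
  rcases eq_zero_or_eq_one ε with rfl | rfl
  · obtain ⟨a, ha, rfl⟩ := der_zero_le_inn_zero hd
    exact ⟨a, ha, rfl⟩
  · obtain ⟨a, ha, rfl⟩ := der_one_le_inn_one hd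
    exact ⟨a, ha, rfl⟩

end

end N2
end
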